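/- Let R = K[x_1,…,x_m,y_1,…,y_n]/(f) be an ℕ²-graded hypersurface with deg x_i = (1,0), deg y_j = (0,1), and f homogeneous of degree (d,e). For a diagonal Δ = (g,h)ℤ, the diagonal subalgebra R_Δ has Krull dimension m + n - 2. -/

import Mathlib

open MvPolynomial

/-!
All rings in sight are domains of finite type over `K`, so their Krull dimensions are transcendence
degrees. The hypersurface ring `R` has transcendence degree `m + n - 1` over `K`: all variables but
one occurring in `f` stay independent modulo `f`. By additivity it remains to see that `R_Δ` is
finitely generated and that `R` has transcendence degree one over it.

Every monomial of bidegree `k • (g, h)` is a product of `k` monomials of bidegree `(g, h)`, so the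
finitely many monomials of bidegree `(g, h)` generate `R_Δ`. Next, `R` is `ℤ`-graded by
`h * deg_x - g * deg_y`, and `R_Δ` sits in degree `0` whereas a nonzero `x_a` has nonzero degree;
hence `x_a` is transcendental over `R_Δ`. Finally, as `x_i ^ g * y_j ^ h` lies in `R_Δ`, first every
`y_j` and then, using some nonzero `y_b`, every `x_i` is algebraic over `R_Δ[x_a]`. With two or more
variables of each kind there are a nonzero `x_a` and a nonzero `y_b`, since a prime `f` divides at
most one variable.
-/

section KrullDimension

theorem ringKrullDim_eq_of_isIntegral_of_faithfulSMul (A B : Type*) [CommRing A] [CommRing B]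
    [Algebra A B] [Algebra.IsIntegral A B] [FaithfulSMul A B] :
    ringKrullDim B = ringKrullDim A := by
  apply le_antisymm
  · exact Order.krullDim_le_of_strictMono (PrimeSpectrum.comap (algebraMap A B))
      fun _ _ hpq ↦ Ideal.IsIntegral.comap_lt_comap (R := A) hpq
  · refine iSup_le fun l ↦ ?_
    obtain ⟨Q, hQ⟩ := Algebra.IsIntegral.comap_surjective A B l.head
    have : Q.asIdeal.LiesOver l.head.asIdeal := ⟨congrArg PrimeSpectrum.asIdeal hQ.symm⟩
    obtain ⟨L, hL, -⟩ := Ideal.exists_ltSeries_of_hasGoingUp l Q.asIdeal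
    exact hL ▸ Order.LTSeries.length_le_krullDim L

theorem ringKrullDim_eq_toNat_trdeg (K B : Type*) [Field K] [CommRing B] [IsDomain B]
    [Algebra K B] [Algebra.FiniteType K B] :
    ringKrullDim B = (Algebra.trdeg K B).toNat := by
  obtain ⟨s, φ, hinj, hint⟩ := exists_integral_inj_algHom_of_fg K B
  algebraize [φ.toRingHom]
  have : FaithfulSMul (MvPolynomial (Fin s) K) B :=
    (faithfulSMul_iff_algebraMap_injective _ _).mpr hinj
  have htrdeg : (Algebra.trdeg K B).toNat = s := by
    have h := lift_trdeg_add_eq K (MvPolynomial (Fin s) K) B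
    rw [trdeg_eq_zero (R := MvPolynomial (Fin s) K), MvPolynomial.trdeg_of_isDomain] at h
    simpa using (congrArg Cardinal.toNat h).symm
  rw [ringKrullDim_eq_of_isIntegral_of_faithfulSMul (MvPolynomial (Fin s) K) B, htrdeg,
    MvPolynomial.ringKrullDim_of_isNoetherianRing, ringKrullDim_eq_zero_of_field]
  simp

end KrullDimension

section Hypersurface

theorem vars_nonempty_of_not_isUnit {K σ : Type*} [Field K] {f : MvPolynomial σ K} (hf : f ≠ 0)
    (hunit : ¬ IsUnit f) : f.vars.Nonempty := by
  rw [Finset.nonempty_iff_ne_empty, Ne, vars_eq_empty_iff_eq_C]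
  intro hC
  have hcoeff : coeff 0 f ≠ 0 := fun h0 ↦ hf (by rw [hC, h0, C_0])
  exact hunit (hC ▸ (IsUnit.mk0 _ hcoeff).map C)

section CommRing

variable {A R σ : Type*} [CommRing A] [CommRing R] [Algebra A R] {π : MvPolynomial σ A →ₐ[A] R}
  {f : MvPolynomial σ A}

theorem not_isUnit_of_ker_eq_span_singleton [Nontrivial R]
    (hker : RingHom.ker π = Ideal.span {f}) : ¬ IsUnit f := by
  rw [← Ideal.span_singleton_eq_top, ← hker]
  exact RingHom.ker_ne_top π

variable [IsDomain A]

theorem vars_subset_vars_of_dvd {p : MvPolynomial σ A} (hfp : f ∣ p) (hp : p ≠ 0) :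
    f.vars ⊆ p.vars := by
  obtain ⟨q, rfl⟩ := hfp
  intro i hi
  rw [mem_vars_iff_degreeOf_ne_zero] at hi ⊢
  rw [degreeOf_mul_eq (left_ne_zero_of_mul hp) (right_ne_zero_of_mul hp)]
  omega

theorem algebraicIndependent_map_X_of_mem_vars (hker : RingHom.ker π ≤ Ideal.span {f}) {i : σ}
    (hi : i ∈ f.vars) : AlgebraicIndependent A (fun j : {j // j ≠ i} ↦ π (X j.1)) := by
  classical
  have hcomp : aeval (fun j : {j // j ≠ i} ↦ π (X j.1)) = π.comp (rename Subtype.val) := by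
    ext j
    simp
  rw [algebraicIndependent_iff, hcomp]
  intro p hp
  by_contra hp0
  have hdvd : f ∣ rename Subtype.val p := Ideal.mem_span_singleton.mp (hker hp)
  have hne : rename Subtype.val p ≠ 0 :=
    (map_ne_zero_iff _ (rename_injective _ Subtype.val_injective)).mpr hp0
  obtain ⟨j, -, hj⟩ := mem_vars_rename _ _ (vars_subset_vars_of_dvd hdvd hne hi)
  exact j.2 hj

theorem exists_map_X_ne_zero [Nontrivial R] (hker : RingHom.ker π = Ideal.span {f}) {τ : Type*}
    [Nontrivial τ] (φ : τ ↪ σ) : ∃ j, π (X (φ j)) ≠ 0 := by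
  by_contra! h
  have hdvd (j : τ) : f ∣ X (φ j) := by
    rw [← Ideal.mem_span_singleton, ← hker, RingHom.mem_ker, h]
  obtain ⟨i, j, hij⟩ := exists_pair_ne τ
  have hassoc : (X (φ i) : MvPolynomial σ A) ∣ f :=
    (X_prime.irreducible.dvd_iff.mp (hdvd i)).elim
      (absurd · (not_isUnit_of_ker_eq_span_singleton hker)) Associated.dvd
  exact hij (φ.injective (X_dvd_X.mp (hassoc.trans (hdvd j))))

end CommRing

theorem toNat_trdeg_add_one_of_ker_eq_span_singleton {K R σ : Type*} [Field K] [CommRing R]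
    [IsDomain R] [Algebra K R] [Finite σ] {π : MvPolynomial σ K →ₐ[K] R} {f : MvPolynomial σ K}
    (hπ : Function.Surjective π) (hf : f ≠ 0) (hker : RingHom.ker π = Ideal.span {f}) :
    (Algebra.trdeg K R).toNat + 1 = Nat.card σ := by
  have : Algebra.FiniteType K R := .of_surjective π hπ
  apply le_antisymm
  · have hπf : π f = 0 := by
      rw [← RingHom.mem_ker, hker]
      exact Ideal.mem_span_singleton_self f
    have hdim := ringKrullDim_succ_le_of_surjective (π : MvPolynomial σ K →+* R) hπ
      (mem_nonZeroDivisors_of_ne_zero hf) hπf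
    rw [ringKrullDim_eq_toNat_trdeg K R, MvPolynomial.ringKrullDim_of_isNoetherianRing,
      ringKrullDim_eq_zero_of_field, zero_add] at hdim
    exact_mod_cast hdim
  · classical
    obtain ⟨i, hi⟩ := vars_nonempty_of_not_isUnit hf (not_isUnit_of_ker_eq_span_singleton hker)
    have hcard := Cardinal.toNat_le_toNat
      (algebraicIndependent_map_X_of_mem_vars hker.le hi).lift_cardinalMk_le_trdeg
      (Cardinal.lift_lt_aleph0.mpr trdeg_lt_aleph0_of_finiteType)
    rw [Cardinal.toNat_lift, Cardinal.toNat_lift] at hcard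
    rw [← Nat.card_congr (Equiv.optionSubtypeNe i), Finite.card_option]
    exact Nat.succ_le_succ hcard

end Hypersurface

section Algebraic

theorem isAlgebraic_of_mul_pow_mem {S R : Type*} [CommRing S] [CommRing R] [IsDomain R]
    [Algebra S R] {B : Subalgebra S R} {r t : R} {N : ℕ} (hN : 0 < N) (hr : r ∈ B) (hr0 : r ≠ 0)
    (hrt : r * t ^ N ∈ B) : IsAlgebraic B t := by
  have halg {s : R} (hs : s ∈ B) : IsAlgebraic B s := isAlgebraic_algebraMap (⟨s, hs⟩ : B)
  exact ((halg hr).of_mul (mem_nonZeroDivisors_of_ne_zero hr0) (halg hrt)).of_pow hN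

theorem isAlgebraic_of_forall_isAlgebraic_map_X {K S R σ : Type*} [CommRing K] [CommRing S]
    [CommRing R] [IsDomain R] [Algebra K S] [Algebra K R] [Algebra S R] [IsScalarTower K S R]
    {π : MvPolynomial σ K →ₐ[K] R} (hπ : Function.Surjective π) {B : Subalgebra S R}
    (hX : ∀ i, IsAlgebraic B (π (X i))) : Algebra.IsAlgebraic B R := by
  have hle : (⊤ : Subalgebra K (MvPolynomial σ K)) ≤
      (((Subalgebra.algebraicClosure B R).restrictScalars S).restrictScalars K).comap π := by
    rw [← adjoin_range_X, Algebra.adjoin_le_iff]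
    rintro _ ⟨i, rfl⟩
    exact hX i
  exact ⟨hπ.forall.mpr fun p ↦ hle (Algebra.mem_top (x := p))⟩

theorem trdeg_eq_one_of_transcendental {S R : Type*} [CommRing S] [CommRing R] [IsDomain R]
    [Algebra S R] {x : R} (hx : Transcendental S x)
    [Algebra.IsAlgebraic (Algebra.adjoin S {x}) R] : Algebra.trdeg S R = 1 := by
  have : Nontrivial S := (algebraMap S R).domain_nontrivial
  have hbasis : IsTranscendenceBasis S (Subtype.val : ({x} : Set R) → R) := by
    rw [isTranscendenceBasis_iff_algebraicIndependent_isAlgebraic, Subtype.range_coe]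
    exact ⟨algebraicIndependent_unique_type_iff.mpr hx, inferInstance⟩
  rw [← hbasis.cardinalMk_eq_trdeg, Cardinal.mk_singleton]

end Algebraic

section DiagonalSubalgebra

theorem pow_le_toSubmodule {K A : Type*} [CommSemiring K] [Semiring A] [Algebra K A]
    {M : Submodule K A} {S : Subalgebra K A} (hM : M ≤ Subalgebra.toSubmodule S) (k : ℕ) :
    M ^ k ≤ Subalgebra.toSubmodule S := by
  induction k with
  | zero => exact Submodule.one_le.mpr S.one_mem
  | succ k ih => exact (mul_le_mul' ih hM).trans S.isIdempotentElem_toSubmodule.le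

/-- The diagonal subalgebra of a graded algebra along the degree `b`: the sum of the graded pieces
whose degree is a natural multiple of `b`. It is encoded as a supremum of submodules, so pieces in
coinciding multiples of `b` are not repeated. -/
def diagonalSubalgebra {ι K A : Type*} [AddCommMonoid ι] [CommSemiring K] [Semiring A]
    [Algebra K A] (𝒜 : ι → Submodule K A) [SetLike.GradedMonoid 𝒜] (b : ι) : Subalgebra K A :=
  (⨆ k : ℕ, 𝒜 (k • b)).toSubalgebra
    (Submodule.mem_iSup_of_mem 0 (by rw [zero_smul]; exact SetLike.GradedOne.one_mem)) <| by
      intro x y hx hy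
      have hxy := Submodule.mul_mem_mul hx hy
      rw [Submodule.iSup_mul] at hxy
      simp only [Submodule.mul_iSup] at hxy
      refine (iSup₂_le fun k l ↦ Submodule.mul_le.mpr fun x hx y hy ↦ ?_) hxy
      refine Submodule.mem_iSup_of_mem (k + l) ?_
      rw [add_smul]
      exact SetLike.GradedMul.mul_mem hx hy

section Graded

variable {ι K A : Type*} [AddCommMonoid ι] [CommSemiring K] [Semiring A] [Algebra K A]
  {𝒜 : ι → Submodule K A} [SetLike.GradedMonoid 𝒜] {b : ι}

theorem le_toSubmodule_diagonalSubalgebra :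
    𝒜 b ≤ Subalgebra.toSubmodule (diagonalSubalgebra 𝒜 b) := by
  have h := le_iSup (fun k : ℕ ↦ 𝒜 (k • b)) 1
  rwa [one_smul] at h

theorem diagonalSubalgebra_eq_adjoin (hpow : ∀ k : ℕ, 𝒜 (k • b) ≤ 𝒜 b ^ k) :
    diagonalSubalgebra 𝒜 b = Algebra.adjoin K (𝒜 b : Set A) := by
  apply le_antisymm
  · rw [← Subalgebra.toSubmodule.le_iff_le]
    exact iSup_le fun k ↦ (hpow k).trans (pow_le_toSubmodule Algebra.subset_adjoin k)
  · exact Algebra.adjoin_le le_toSubmodule_diagonalSubalgebra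

theorem diagonalSubalgebra_fg (hfg : (𝒜 b).FG) (hpow : ∀ k : ℕ, 𝒜 (k • b) ≤ 𝒜 b ^ k) :
    (diagonalSubalgebra 𝒜 b).FG := by
  obtain ⟨s, hs⟩ := hfg
  exact ⟨s, by rw [diagonalSubalgebra_eq_adjoin hpow, ← hs, Algebra.adjoin_span]⟩

end Graded

theorem transcendental_of_mem_graded {ι K A R : Type*} [DecidableEq ι] [AddCommMonoid ι]
    [CommRing K] [CommRing A] [Algebra K A] {𝒜 : ι → Submodule K A} [GradedAlgebra 𝒜]
    [CommRing R] [Algebra K R] {π : A →ₐ[K] R} (hker : (RingHom.ker π).IsHomogeneous 𝒜)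
    {S : Subalgebra K R} (hS : Subalgebra.toSubmodule S ≤ (𝒜 0).map π.toLinearMap) {i : ι}
    (hi : Function.Injective fun k : ℕ ↦ k • i) {x : A} (hx : x ∈ 𝒜 i)
    (hreg : π x ∈ nonZeroDivisors R) : Transcendental S (π x) := by
  choose c hc hcS using fun s : S ↦ hS s.2
  simp only [AlgHom.toLinearMap_apply] at hcS
  have hmem (s : S) (k : ℕ) : c s * x ^ k ∈ 𝒜 (k • i) := by
    simpa using SetLike.mul_mem_graded (hc s) (SetLike.pow_mem_graded k hx)
  rw [transcendental_iff]
  intro p hp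
  have hq : ∑ k ∈ p.support, c (p.coeff k) * x ^ k ∈ RingHom.ker π := by
    rw [Polynomial.aeval_def, Polynomial.eval₂_eq_sum, Polynomial.sum_def] at hp
    simpa [hcS] using hp
  ext k
  by_cases hk : k ∈ p.support
  · have hcomp := hker (k • i) hq
    rw [DirectSum.decompose_sum, DFinsupp.finsetSum_apply, AddSubmonoidClass.coe_finsetSum,
      Finset.sum_eq_single_of_mem k hk fun j _ hjk ↦
        DirectSum.decompose_of_mem_ne 𝒜 (hmem _ j) (hi.ne hjk),
      DirectSum.decompose_of_mem_same 𝒜 (hmem _ k), RingHom.mem_ker, map_mul, map_pow, hcS] at hcomp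
    simpa using (mem_nonZeroDivisors_iff_right.mp (pow_mem hreg k)) _ hcomp
  · simpa using hk

end DiagonalSubalgebra

section Bigraded

attribute [local instance] WeightedHomogeneousSubmodule.gradedMonoid weightedGradedAlgebra

theorem isWeightedHomogeneous_comp {K σ M N : Type*} [CommSemiring K] [AddCommMonoid M]
    [AddCommMonoid N] {w : σ → M} {a : M} {p : MvPolynomial σ K} (hp : p.IsWeightedHomogeneous w a)
    (l : M →+ N) : p.IsWeightedHomogeneous (l ∘ w) (l a) := by
  intro s hs
  rw [← hp hs, Finsupp.weight_apply, Finsupp.weight_apply, map_finsuppSum]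
  simp

theorem transcendental_map_X_of_isWeightedHomogeneous {K R σ M : Type*} [CommRing K] [CommRing R]
    [Algebra K R] [AddCommMonoid M] {w : σ → M} {π : MvPolynomial σ K →ₐ[K] R}
    {f : MvPolynomial σ K} {c : M} (hf : f.IsWeightedHomogeneous w c)
    (hker : RingHom.ker π = Ideal.span {f}) (l : M →+ ℤ) {b : M} (hb : l b = 0) {i : σ}
    (hi : l (w i) ≠ 0) (hreg : π (X i) ∈ nonZeroDivisors R) :
    Transcendental ((diagonalSubalgebra (weightedHomogeneousSubmodule K w) b).map π)
      (π (X i)) := by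
  refine transcendental_of_mem_graded (𝒜 := weightedHomogeneousSubmodule K (l ∘ w))
    ?_ ?_ ?_ (isWeightedHomogeneous_X K (l ∘ w) i) hreg
  · rw [hker]
    refine Ideal.homogeneous_span _ _ ?_
    rintro _ rfl
    exact ⟨l c, isWeightedHomogeneous_comp hf l⟩
  · change (⨆ k : ℕ, weightedHomogeneousSubmodule K w (k • b)).map π.toLinearMap ≤ _
    refine Submodule.map_mono (iSup_le fun k p hp ↦ ?_)
    simpa [hb] using isWeightedHomogeneous_comp hp l
  · exact fun j k hjk ↦ by simpa [hi] using hjk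

/-- The `ℕ²`-valued weight for which the variables indexed by `σ` have weight `(1, 0)` and those
indexed by `τ` have weight `(0, 1)`, so that weighted homogeneous means bihomogeneous. -/
abbrev bidegree (σ τ : Type*) : σ ⊕ τ → ℕ × ℕ :=
  Sum.elim (fun _ ↦ (1, 0)) (fun _ ↦ (0, 1))

section Monomials

variable {σ τ : Type*}

theorem weight_bidegree_sumElim (s : σ →₀ ℕ) (t : τ →₀ ℕ) :
    Finsupp.weight (bidegree σ τ) (s.sumElim t) = (s.degree, t.degree) := by
  rw [Finsupp.weight_apply, Finsupp.sum_sumElim, Finsupp.degree_apply, Finsupp.degree_apply]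
  ext <;> simp [Finsupp.sum, Prod.fst_sum, Prod.snd_sum]

theorem degree_eq_weight_bidegree (s : σ ⊕ τ →₀ ℕ) :
    s.degree = (Finsupp.weight (bidegree σ τ) s).1 + (Finsupp.weight (bidegree σ τ) s).2 := by
  induction s using Finsupp.induction_linear with
  | zero => simp
  | add s t hs ht => rw [map_add, map_add, hs, ht, Prod.fst_add, Prod.snd_add, add_add_add_comm]
  | single i k => cases i <;> simp [Finsupp.weight_single]

theorem exists_le_weight_bidegree_eq (s : σ ⊕ τ →₀ ℕ) {b : ℕ × ℕ}
    (hb : b ≤ Finsupp.weight (bidegree σ τ) s) :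
    ∃ t ≤ s, Finsupp.weight (bidegree σ τ) t = b := by
  obtain ⟨⟨s₁, s₂⟩, rfl⟩ := Finsupp.sumFinsuppEquivProdFinsupp.symm.surjective s
  change b ≤ Finsupp.weight (bidegree σ τ) (s₁.sumElim s₂) at hb
  rw [weight_bidegree_sumElim] at hb
  obtain ⟨t₁, ht₁, h₁⟩ := Finsupp.exists_le_degree_eq _ _ hb.1
  obtain ⟨t₂, ht₂, h₂⟩ := Finsupp.exists_le_degree_eq _ _ hb.2
  exact ⟨t₁.sumElim t₂, Sum.rec ht₁ ht₂, by rw [weight_bidegree_sumElim, h₁, h₂]⟩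

open scoped Pointwise in
theorem setOf_weight_bidegree_eq_nsmul_subset (b : ℕ × ℕ) (k : ℕ) :
    {s : σ ⊕ τ →₀ ℕ | Finsupp.weight (bidegree σ τ) s = k • b} ⊆
      k • {s : σ ⊕ τ →₀ ℕ | Finsupp.weight (bidegree σ τ) s = b} := by
  induction k with
  | zero =>
    intro s hs
    have : s = 0 := by
      simp [← Finsupp.degree_eq_zero_iff, degree_eq_weight_bidegree, Set.mem_ofPred_eq.mp hs]
    simp [this]
  | succ k ih =>
    intro s hs
    rw [Set.mem_ofPred_eq, succ_nsmul] at hs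
    obtain ⟨t, hts, ht⟩ := exists_le_weight_bidegree_eq s (b := b) (by rw [hs]; exact le_add_self)
    obtain ⟨u, rfl⟩ := exists_add_of_le hts
    rw [map_add, ht, add_comm, add_left_inj] at hs
    rw [add_comm t u, succ_nsmul]
    exact Set.add_mem_add (ih hs) ht

variable (K : Type*) [CommSemiring K]

theorem weightedHomogeneousSubmodule_bidegree_nsmul_le (b : ℕ × ℕ) (k : ℕ) :
    weightedHomogeneousSubmodule K (bidegree σ τ) (k • b) ≤
      weightedHomogeneousSubmodule K (bidegree σ τ) b ^ k := by
  simp only [weightedHomogeneousSubmodule_eq_finsupp_supported]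
  change restrictSupport K _ ≤ restrictSupport K _ ^ k
  rw [← restrictSupport_nsmul]
  exact restrictSupport_mono K (setOf_weight_bidegree_eq_nsmul_subset b k)

theorem weightedHomogeneousSubmodule_bidegree_fg [Finite σ] [Finite τ] (b : ℕ × ℕ) :
    (weightedHomogeneousSubmodule K (bidegree σ τ) b).FG := by
  rw [weightedHomogeneousSubmodule_eq_finsupp_supported]
  change (restrictSupport K _).FG
  rw [restrictSupport_eq_span]
  refine Submodule.fg_span (Set.Finite.image _ ?_)
  refine (Finsupp.finite_of_degree_le (b.1 + b.2)).subset fun s hs ↦ ?_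
  rw [Set.mem_ofPred_eq, degree_eq_weight_bidegree, Set.mem_ofPred_eq.mp hs]

end Monomials

variable {K R σ τ : Type*}

theorem X_pow_mul_X_pow_mem_diagonalSubalgebra [CommSemiring K] (g h : ℕ) (i : σ) (j : τ) :
    X (.inl i) ^ g * X (.inr j) ^ h ∈
      diagonalSubalgebra (weightedHomogeneousSubmodule K (bidegree σ τ)) (g, h) := by
  apply le_toSubmodule_diagonalSubalgebra
  simpa using ((isWeightedHomogeneous_X K (bidegree σ τ) (.inl i)).pow g).mul
    ((isWeightedHomogeneous_X K (bidegree σ τ) (.inr j)).pow h)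

theorem trdeg_map_diagonalSubalgebra_bidegree [CommRing K] [CommRing R] [IsDomain R] [Algebra K R]
    {π : MvPolynomial (σ ⊕ τ) K →ₐ[K] R} (hπ : Function.Surjective π)
    {f : MvPolynomial (σ ⊕ τ) K} {c : ℕ × ℕ} (hf : f.IsWeightedHomogeneous (bidegree σ τ) c)
    (hker : RingHom.ker π = Ideal.span {f}) {g h : ℕ} (hg : 0 < g) (hh : 0 < h) {a : σ} {b : τ}
    (ha : π (X (.inl a)) ≠ 0) (hb : π (X (.inr b)) ≠ 0) :
    Algebra.trdeg ((diagonalSubalgebra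
      (weightedHomogeneousSubmodule K (bidegree σ τ)) (g, h)).map π) R = 1 := by
  set S := (diagonalSubalgebra (weightedHomogeneousSubmodule K (bidegree σ τ)) (g, h)).map π
  let l : ℕ × ℕ →+ ℤ := h • (Nat.castAddMonoidHom ℤ).comp (AddMonoidHom.fst ℕ ℕ) -
    g • (Nat.castAddMonoidHom ℤ).comp (AddMonoidHom.snd ℕ ℕ)
  have htr : Transcendental S (π (X (.inl a))) :=
    transcendental_map_X_of_isWeightedHomogeneous hf hker l (by simp [l, mul_comm])
      (by simpa [l] using hh.ne') (mem_nonZeroDivisors_of_ne_zero ha)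
  let B := Algebra.adjoin S {π (X (.inl a))}
  have hxB : π (X (.inl a)) ∈ B := Algebra.self_mem_adjoin_singleton S _
  have hSB (i : σ) (j : τ) : π (X (.inl i)) ^ g * π (X (.inr j)) ^ h ∈ B := by
    rw [← map_pow, ← map_pow, ← map_mul]
    exact B.algebraMap_mem ⟨_, _, X_pow_mul_X_pow_mem_diagonalSubalgebra g h i j, rfl⟩
  have hX : ∀ i, IsAlgebraic B (π (X i)) := by
    rintro (i | j)
    · refine isAlgebraic_of_mul_pow_mem hg (hSB a b)
        (mul_ne_zero (pow_ne_zero _ ha) (pow_ne_zero _ hb)) ?_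
      rw [mul_assoc, mul_comm (_ ^ h)]
      exact mul_mem (pow_mem hxB g) (hSB i b)
    · exact isAlgebraic_of_mul_pow_mem hh (pow_mem hxB g) (pow_ne_zero _ ha) (hSB a j)
  have : Algebra.IsAlgebraic B R := isAlgebraic_of_forall_isAlgebraic_map_X hπ hX
  exact trdeg_eq_one_of_transcendental htr

theorem eq_map_diagonalSubalgebra_bidegree [CommSemiring K] [CommSemiring R] [Algebra K R]
    {π : MvPolynomial (σ ⊕ τ) K →ₐ[K] R} {g h : ℕ} {S : Subalgebra K R}
    (hS : Subalgebra.toSubmodule S = ⨆ k : ℕ,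
      (weightedHomogeneousSubmodule K (bidegree σ τ) (g * k, h * k)).map π.toLinearMap) :
    S = (diagonalSubalgebra (weightedHomogeneousSubmodule K (bidegree σ τ)) (g, h)).map π := by
  have hk (k : ℕ) : (g * k, h * k) = k • (g, h) := by simp [mul_comm k]
  apply Subalgebra.toSubmodule_injective
  simp only [hS, hk, ← Submodule.map_iSup]
  rfl

theorem ringKrullDim_map_diagonalSubalgebra_bidegree [Field K] [CommRing R] [IsDomain R]
    [Algebra K R] [Finite σ] [Finite τ] [Nontrivial σ] [Nontrivial τ]
    {π : MvPolynomial (σ ⊕ τ) K →ₐ[K] R} (hπ : Function.Surjective π)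
    {f : MvPolynomial (σ ⊕ τ) K} (hf0 : f ≠ 0) {c : ℕ × ℕ}
    (hf : f.IsWeightedHomogeneous (bidegree σ τ) c)
    (hker : RingHom.ker π = Ideal.span {f}) {g h : ℕ} (hg : 0 < g) (hh : 0 < h) :
    ringKrullDim ((diagonalSubalgebra
      (weightedHomogeneousSubmodule K (bidegree σ τ)) (g, h)).map π) =
        (Nat.card σ + Nat.card τ - 2 : ℕ) := by
  set S := (diagonalSubalgebra (weightedHomogeneousSubmodule K (bidegree σ τ)) (g, h)).map π
  obtain ⟨a, ha⟩ := exists_map_X_ne_zero hker (τ := σ) .inl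
  obtain ⟨b, hb⟩ := exists_map_X_ne_zero hker (τ := τ) .inr
  have : Algebra.FiniteType K S := S.fg_iff_finiteType.mp <|
    (diagonalSubalgebra_fg (weightedHomogeneousSubmodule_bidegree_fg K _)
      (weightedHomogeneousSubmodule_bidegree_nsmul_le K _)).map π
  have hadd : (Algebra.trdeg K S).toNat + 1 = (Algebra.trdeg K R).toNat := by
    rw [← trdeg_add_eq K S (A := R), trdeg_map_diagonalSubalgebra_bidegree hπ hf hker hg hh ha hb,
      Cardinal.toNat_add trdeg_lt_aleph0_of_finiteType Cardinal.one_lt_aleph0, Cardinal.one_toNat]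
  have htrdeg := toNat_trdeg_add_one_of_ker_eq_span_singleton hπ hf0 hker
  rw [Nat.card_sum] at htrdeg
  rw [ringKrullDim_eq_toNat_trdeg K S]
  congr 2
  omega

end Bigraded

theorem stmt13_general {K σ τ : Type*} [Field K] [Finite σ] [Finite τ] [Nontrivial σ]
    [Nontrivial τ] {f : MvPolynomial (σ ⊕ τ) K} (hf0 : f ≠ 0) {c : ℕ × ℕ}
    (hf : f.IsWeightedHomogeneous (bidegree σ τ) c)
    [IsDomain (MvPolynomial (σ ⊕ τ) K ⧸ Ideal.span {f})] {g h : ℕ} (hg : 0 < g) (hh : 0 < h)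
    {S : Subalgebra K (MvPolynomial (σ ⊕ τ) K ⧸ Ideal.span {f})}
    (hS : Subalgebra.toSubmodule S = ⨆ k : ℕ,
      (weightedHomogeneousSubmodule K (bidegree σ τ) (g * k, h * k)).map
        (Ideal.Quotient.mkₐ K (Ideal.span {f})).toLinearMap) :
    ringKrullDim S = (Nat.card σ + Nat.card τ - 2 : ℕ) := by
  rw [eq_map_diagonalSubalgebra_bidegree hS]
  exact ringKrullDim_map_diagonalSubalgebra_bidegree (Ideal.Quotient.mkₐ_surjective K _) hf0 hf
    (Ideal.Quotient.mkₐ_ker K _) hg hh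

/-- Let `R = K[x₁,…,x_m,y₁,…,y_n]/(f)` be an `ℕ²`-graded hypersurface, where
`deg xᵢ = (1,0)`, `deg yⱼ = (0,1)` and `f` is a nonzero bihomogeneous polynomial of
bidegree `(d,e) ≠ (0,0)` such that `R` is a normal domain.  For positive integers
`g, h`, the diagonal subalgebra `R_Δ = ⊕_k R_{(gk,hk)}` has Krull dimension
`m + n - 2`. -/
theorem stmt13 (K : Type) [Field K] (m n d e g h : ℕ)
    (hm : 2 ≤ m) (hn : 2 ≤ n) (hde : (d, e) ≠ (0, 0)) (hg : 0 < g) (hh : 0 < h)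
    (f : MvPolynomial (Fin m ⊕ Fin n) K)
    (hfhom : f.IsWeightedHomogeneous
      (Sum.elim (fun _ => ((1, 0) : ℕ × ℕ)) (fun _ => ((0, 1) : ℕ × ℕ))) (d, e))
    (hf : f ≠ 0)
    (hdom : IsDomain (MvPolynomial (Fin m ⊕ Fin n) K ⧸
      (Ideal.span {f} : Ideal (MvPolynomial (Fin m ⊕ Fin n) K))))
    (hnormal : IsIntegrallyClosed (MvPolynomial (Fin m ⊕ Fin n) K ⧸
      (Ideal.span {f} : Ideal (MvPolynomial (Fin m ⊕ Fin n) K))))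
    (S : Subalgebra K (MvPolynomial (Fin m ⊕ Fin n) K ⧸
      (Ideal.span {f} : Ideal (MvPolynomial (Fin m ⊕ Fin n) K))))
    (hS : Subalgebra.toSubmodule S = ⨆ k : ℕ,
      Submodule.map (Ideal.Quotient.mkₐ K
          (Ideal.span {f} : Ideal (MvPolynomial (Fin m ⊕ Fin n) K))).toLinearMap
        (weightedHomogeneousSubmodule K
          (Sum.elim (fun _ => ((1, 0) : ℕ × ℕ)) (fun _ => ((0, 1) : ℕ × ℕ)))
          (g * k, h * k))) :
    ringKrullDim S = ((m + n - 2 : ℕ) : WithBot (WithTop ℕ)) := by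
  rw [← Fin.nontrivial_iff_two_le] at hm hn
  simpa only [Nat.card_fin] using! stmt13_general hf hfhom hg hh hS
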